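/- arXiv:1808.04199 — 2 statements merged into one kernel-verified Lean document; each statement's English description precedes it below -/
import Mathlib

section
/- Fix t ≥ 0. If σ is a permutation with t_rev(σ) ≥ t+1 such that every permutation properly contained in σ has rev-tier at most t (i.e., σ is a basis element of the class of permutations with rev-tier at most t), then the length of σ is at most 3(t+1). -/
/-!  Common definitions: permutation patterns, separated pairs, rev-tier. -/

/-- `π` contains the pattern `σ`. -/
def Pattern.Contains {n k : ℕ} (π : Equiv.Perm (Fin n)) (σ : Equiv.Perm (Fin k)) : Prop :=
  ∃ α : Fin k → Fin n, StrictMono α ∧ ∀ i j : Fin k, (π (α i) < π (α j) ↔ σ i < σ j)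

/-- `π` avoids the pattern `σ`. -/
def Pattern.Avoids {n k : ℕ} (π : Equiv.Perm (Fin n)) (σ : Equiv.Perm (Fin k)) : Prop :=
  ¬ Pattern.Contains π σ

/-- The pair of values `(a, a+1)` (0-indexed) is an up oriented separated pair in `σ`:
`a` precedes `a+1` and some value `> a+1` occurs strictly between them. -/
def UpSepPair {n : ℕ} (σ : Equiv.Perm (Fin n)) (a : Fin n) : Prop :=
  ∃ hb : (a : ℕ) + 1 < n,
    σ.symm a < σ.symm ⟨(a : ℕ) + 1, hb⟩ ∧
    ∃ p : Fin n, σ.symm a < p ∧ p < σ.symm ⟨(a : ℕ) + 1, hb⟩ ∧ (a : ℕ) + 1 < (σ p : ℕ)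

/-- The pair of values `(a, a+1)` (0-indexed) is a down oriented separated pair in `σ`. -/
def DownSepPair {n : ℕ} (σ : Equiv.Perm (Fin n)) (a : Fin n) : Prop :=
  ∃ hb : (a : ℕ) + 1 < n,
    σ.symm ⟨(a : ℕ) + 1, hb⟩ < σ.symm a ∧
    ∃ p : Fin n, σ.symm ⟨(a : ℕ) + 1, hb⟩ < p ∧ p < σ.symm a ∧ (a : ℕ) + 1 < (σ p : ℕ)

/-- `(a, a+1)` is a separated pair (of either orientation). -/
def SepPair {n : ℕ} (σ : Equiv.Perm (Fin n)) (a : Fin n) : Prop :=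
  UpSepPair σ a ∨ DownSepPair σ a

/-- `σ` has no separated pairs. -/
def NoSepPairs {n : ℕ} (σ : Equiv.Perm (Fin n)) : Prop :=
  ∀ a : Fin n, ¬ SepPair σ a

/-- `f` lists the lower values of an increasing sequence of separated pairs in `σ` with
alternating orientations; the first pair is down oriented iff `firstDown = true`. -/
def AltChain {n : ℕ} (σ : Equiv.Perm (Fin n)) (firstDown : Bool) {t : ℕ}
    (f : Fin t → Fin n) : Prop :=
  StrictMono f ∧ ∀ j : Fin t,
    if ((j : ℕ) % 2 = 0) ↔ (firstDown = true) then DownSepPair σ (f j)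
    else UpSepPair σ (f j)

/-- The rev-tier of `σ`: the maximal length of an increasing sequence of separated pairs
with alternating orientations beginning with a down oriented pair. -/
noncomputable def revTier {n : ℕ} (σ : Equiv.Perm (Fin n)) : ℕ :=
  sSup {t : ℕ | ∃ f : Fin t → Fin n, AltChain σ true f}

/-- Maximal length of an increasing alternating sequence of separated pairs (either
starting orientation). -/
noncomputable def maxAltLen {n : ℕ} (σ : Equiv.Perm (Fin n)) : ℕ :=
  sSup {t : ℕ | ∃ b : Bool, ∃ f : Fin t → Fin n, AltChain σ b f}

/-- `σ` has a separated pair and every maximum-length increasing alternating sequence of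
separated pairs begins with an up oriented pair. -/
def UpOriented {n : ℕ} (σ : Equiv.Perm (Fin n)) : Prop :=
  1 ≤ maxAltLen σ ∧ ¬ ∃ f : Fin (maxAltLen σ) → Fin n, AltChain σ true f

/-- `σ` has a separated pair and every maximum-length increasing alternating sequence of
separated pairs begins with a down oriented pair. -/
def DownOriented {n : ℕ} (σ : Equiv.Perm (Fin n)) : Prop :=
  1 ≤ maxAltLen σ ∧ ¬ ∃ f : Fin (maxAltLen σ) → Fin n, AltChain σ false f

/-- `σ` is a basis element of the class of permutations of rev-tier at most `t`. -/
def IsBasisElt (t : ℕ) {n : ℕ} (σ : Equiv.Perm (Fin n)) : Prop :=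
  t + 1 ≤ revTier σ ∧
  ∀ (m : ℕ) (τ : Equiv.Perm (Fin m)), m < n → Pattern.Contains σ τ → revTier τ ≤ t

/-- The entry `1` of `σ` is in (1-indexed) position `k`. -/
def onePos {n : ℕ} (σ : Equiv.Perm (Fin n)) (k : ℕ) : Prop :=
  ∀ h : 0 < n, (σ.symm ⟨0, h⟩ : ℕ) + 1 = k

/-- `η(n,k)`: number of permutations of length `n` with no separated pairs and entry `1`
in position `k`. -/
noncomputable def eta (n k : ℕ) : ℕ :=
  Nat.card {σ : Equiv.Perm (Fin n) // NoSepPairs σ ∧ onePos σ k}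

/-- `η(n)`: number of permutations of length `n` with no separated pairs. -/
noncomputable def etaTot (n : ℕ) : ℕ :=
  Nat.card {σ : Equiv.Perm (Fin n) // NoSepPairs σ}

/-- `μ_U(n,t,k)`: number of up-oriented permutations of length `n`, rev-tier `t`, with
entry `1` in position `k`. -/
noncomputable def muU (n t k : ℕ) : ℕ :=
  Nat.card {σ : Equiv.Perm (Fin n) // UpOriented σ ∧ revTier σ = t ∧ onePos σ k}

/-- `μ_D(n,t,k)`: number of down-oriented permutations of length `n`, rev-tier `t`, with
entry `1` in position `k`. -/
noncomputable def muD (n t k : ℕ) : ℕ :=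
  Nat.card {σ : Equiv.Perm (Fin n) // DownOriented σ ∧ revTier σ = t ∧ onePos σ k}

/-- `π` is a down-up alternating permutation: `π₁ > π₂ < π₃ > ⋯`. -/
def DownUp {n : ℕ} (π : Equiv.Perm (Fin n)) : Prop :=
  ∀ (i : ℕ) (h : i + 1 < n),
    if i % 2 = 0 then π ⟨i + 1, h⟩ < π ⟨i, by omega⟩
    else π ⟨i, by omega⟩ < π ⟨i + 1, h⟩

/-- The Entringer number `E_{n,k}`: down-up alternating permutations of length `n` whose
first entry is `k` (1-indexed value). -/
noncomputable def entringer (n k : ℕ) : ℕ :=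
  Nat.card {π : Equiv.Perm (Fin n) // DownUp π ∧ ∀ h : 0 < n, (π ⟨0, h⟩ : ℕ) + 1 = k}

/-- The reversal of a permutation: `(revP σ) j = σ (n + 1 - j)`. -/
def revP {n : ℕ} (σ : Equiv.Perm (Fin n)) : Equiv.Perm (Fin n) :=
  (Fin.revPerm).trans σ

/-- The explicit maximal rev-tier permutation of length `n` (0-indexed values):
the even entries of `{1,…,n}` in decreasing order, then `n`, then the odd entries in
increasing order. -/
def maxPermVal (n : ℕ) (i : Fin n) : Fin n :=
  if h1 : (i : ℕ) < (n - 1) / 2 then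
    ⟨2 * ((n - 1) / 2) - 2 * (i : ℕ) - 1, by omega⟩
  else if h2 : (i : ℕ) = (n - 1) / 2 then
    ⟨n - 1, by have := i.isLt; omega⟩
  else
    ⟨2 * ((i : ℕ) - (n - 1) / 2 - 1), by have := i.isLt; omega⟩

def p231 : Equiv.Perm (Fin 3) :=
  ⟨![1, 2, 0], ![2, 0, 1], by decide, by decide⟩

def p132 : Equiv.Perm (Fin 3) :=
  ⟨![0, 2, 1], ![0, 2, 1], by decide, by decide⟩

def p2413 : Equiv.Perm (Fin 4) :=
  ⟨![1, 3, 0, 2], ![2, 0, 3, 1], by decide, by decide⟩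

def p2431 : Equiv.Perm (Fin 4) :=
  ⟨![1, 3, 2, 0], ![3, 0, 2, 1], by decide, by decide⟩

def p23154 : Equiv.Perm (Fin 5) :=
  ⟨![1, 2, 0, 4, 3], ![2, 0, 1, 4, 3], by decide, by decide⟩

def p24153 : Equiv.Perm (Fin 5) :=
  ⟨![1, 3, 0, 4, 2], ![2, 0, 4, 1, 3], by decide, by decide⟩

def p24513 : Equiv.Perm (Fin 5) :=
  ⟨![1, 3, 4, 0, 2], ![3, 0, 4, 1, 2], by decide, by decide⟩

def p24531 : Equiv.Perm (Fin 5) :=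
  ⟨![1, 3, 4, 2, 0], ![4, 0, 3, 1, 2], by decide, by decide⟩

def p42513 : Equiv.Perm (Fin 5) :=
  ⟨![3, 1, 4, 0, 2], ![3, 1, 4, 0, 2], by decide, by decide⟩

def p42531 : Equiv.Perm (Fin 5) :=
  ⟨![3, 1, 4, 2, 0], ![4, 1, 3, 0, 2], by decide, by decide⟩

def p231564 : Equiv.Perm (Fin 6) :=
  ⟨![1, 2, 0, 4, 5, 3], ![2, 0, 1, 5, 3, 4], by decide, by decide⟩

def p261453 : Equiv.Perm (Fin 6) :=
  ⟨![1, 5, 0, 3, 4, 2], ![2, 0, 5, 3, 4, 1], by decide, by decide⟩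

def p523164 : Equiv.Perm (Fin 6) :=
  ⟨![4, 1, 2, 0, 5, 3], ![3, 1, 2, 5, 0, 4], by decide, by decide⟩

def p562413 : Equiv.Perm (Fin 6) :=
  ⟨![4, 5, 1, 3, 0, 2], ![4, 2, 5, 3, 0, 1], by decide, by decide⟩

def p562431 : Equiv.Perm (Fin 6) :=
  ⟨![4, 5, 1, 3, 2, 0], ![5, 2, 4, 3, 0, 1], by decide, by decide⟩

def p6723154 : Equiv.Perm (Fin 7) :=
  ⟨![5, 6, 1, 2, 0, 4, 3], ![4, 2, 3, 6, 5, 0, 1], by decide, by decide⟩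

def p4321 : Equiv.Perm (Fin 4) :=
  ⟨![3, 2, 1, 0], ![3, 2, 1, 0], by decide, by decide⟩

def p4213 : Equiv.Perm (Fin 4) :=
  ⟨![3, 1, 0, 2], ![2, 1, 3, 0], by decide, by decide⟩

/-!
For each pair `(a, a + 1)` of an alternating chain of separated pairs of `σ`, mark the entries `a`,
`a + 1` and one larger entry between them. In the pattern formed by the marked entries, `a` and
`a + 1` are still adjacent in value, since no value lies between them in `σ` either; hence every
pair is still separated with the same orientation. So a chain of `k` pairs already occurs in a
pattern of length at most `3 * k`, and minimality forces a basis element to be that pattern.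
-/

open Finset

section Occurrence

variable {n k : ℕ}

/-- The positions `α` form an occurrence of the pattern `σ` in `π`, and `Pattern.Contains π σ`
says that some `α` does. -/
structure IsOccurrence (π : Equiv.Perm (Fin n)) (σ : Equiv.Perm (Fin k)) (α : Fin k → Fin n) :
    Prop where
  strictMono : StrictMono α
  lt_iff_lt : ∀ i j, π (α i) < π (α j) ↔ σ i < σ j

lemma IsOccurrence.contains {π : Equiv.Perm (Fin n)} {σ : Equiv.Perm (Fin k)}
    {α : Fin k → Fin n} (hα : IsOccurrence π σ α) : Pattern.Contains π σ :=
  ⟨α, hα.strictMono, hα.lt_iff_lt⟩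

lemma IsOccurrence.covBy_of_apply {π : Equiv.Perm (Fin n)} {σ : Equiv.Perm (Fin k)}
    {α : Fin k → Fin n} (hα : IsOccurrence π σ α) {i j : Fin k} (h : π (α i) ⋖ π (α j)) :
    σ i ⋖ σ j := by
  refine ⟨(hα.lt_iff_lt i j).1 h.lt, fun v hiv hvj => ?_⟩
  obtain ⟨p, rfl⟩ := σ.surjective v
  exact h.2 ((hα.lt_iff_lt i p).2 hiv) ((hα.lt_iff_lt p j).2 hvj)

lemma exists_perm_lt_iff_lt {β : Type*} [LinearOrder β] {f : Fin k → β}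
    (hf : Function.Injective f) : ∃ σ : Equiv.Perm (Fin k), ∀ i j, f i < f j ↔ σ i < σ j := by
  have hsort : StrictMono (f ∘ Tuple.sort f) :=
    (Tuple.monotone_sort f).strictMono_of_injective (hf.comp (Tuple.sort f).injective)
  refine ⟨(Tuple.sort f).symm, fun i j => ?_⟩
  simpa using hsort.lt_iff_lt (a := (Tuple.sort f).symm i) (b := (Tuple.sort f).symm j)

lemma exists_isOccurrence_range_eq (π : Equiv.Perm (Fin n)) (s : Finset (Fin n)) :
    ∃ (σ : Equiv.Perm (Fin #s)) (α : Fin #s → Fin n), IsOccurrence π σ α ∧ Set.range α = s := by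
  let α := s.orderEmbOfFin rfl
  obtain ⟨σ, hσ⟩ := exists_perm_lt_iff_lt (π.injective.comp α.injective)
  exact ⟨σ, α, ⟨α.strictMono, hσ⟩, s.range_orderEmbOfFin rfl⟩

end Occurrence

section SepTriple

variable {n : ℕ} {σ : Equiv.Perm (Fin n)} {a : Fin n}

/-- The positions of a separated pair and of a separating entry: the values at `i` and `j` are
`a` and `a + 1` for some `a`, and a larger value stands at `p`, between `i` and `j`. The pair is
down oriented if the proposition `down` holds and up oriented otherwise. -/
structure IsSepTriple (σ : Equiv.Perm (Fin n)) (down : Prop) (i p j : Fin n) : Prop where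
  covBy : σ i ⋖ σ j
  lt : σ j < σ p
  between_of_down : down → j < p ∧ p < i
  between_of_up : ¬ down → i < p ∧ p < j

lemma IsOccurrence.isSepTriple {m : ℕ} {τ : Equiv.Perm (Fin m)} {α : Fin m → Fin n}
    (hα : IsOccurrence σ τ α) {down : Prop} {i p j : Fin m}
    (h : IsSepTriple σ down (α i) (α p) (α j)) : IsSepTriple τ down i p j where
  covBy := hα.covBy_of_apply h.covBy
  lt := (hα.lt_iff_lt j p).1 h.lt
  between_of_down := by simpa only [hα.strictMono.lt_iff_lt] using h.between_of_down
  between_of_up := by simpa only [hα.strictMono.lt_iff_lt] using h.between_of_up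

lemma exists_isSepTriple_iff {down : Prop} :
    (∃ i p j, IsSepTriple σ down i p j ∧ σ i = a) ↔ ∃ (hb : (a : ℕ) + 1 < n) (p : Fin n),
      (a : ℕ) + 1 < σ p ∧ (down → σ.symm ⟨a + 1, hb⟩ < p ∧ p < σ.symm a) ∧
        (¬ down → σ.symm a < p ∧ p < σ.symm ⟨a + 1, hb⟩) := by
  constructor
  · rintro ⟨i, p, j, h, rfl⟩
    have hj : (σ i : ℕ) + 1 = σ j := by simpa using h.covBy
    have hb : (σ i : ℕ) + 1 < n := hj ▸ (σ j).isLt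
    have hsymm : σ.symm ⟨σ i + 1, hb⟩ = j := (Equiv.symm_apply_eq σ).2 (Fin.ext hj)
    refine ⟨hb, p, ?_⟩
    rw [hsymm, Equiv.symm_apply_apply, hj]
    exact ⟨h.lt, h.between_of_down, h.between_of_up⟩
  · rintro ⟨hb, p, hlt, hdown, hup⟩
    exact ⟨σ.symm a, p, σ.symm ⟨a + 1, hb⟩,
      ⟨by simp, by simpa [Fin.lt_def] using hlt, hdown, hup⟩, σ.apply_symm_apply a⟩

lemma downSepPair_iff_exists_isSepTriple {down : Prop} (hd : down) :
    DownSepPair σ a ↔ ∃ i p j, IsSepTriple σ down i p j ∧ σ i = a := by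
  rw [exists_isSepTriple_iff]
  refine exists_congr fun hb => ⟨?_, ?_⟩
  · rintro ⟨-, p, hjp, hpi, hlt⟩
    exact ⟨p, hlt, fun _ => ⟨hjp, hpi⟩, fun hu => absurd hd hu⟩
  · rintro ⟨p, hlt, hdown, -⟩
    obtain ⟨hjp, hpi⟩ := hdown hd
    exact ⟨hjp.trans hpi, p, hjp, hpi, hlt⟩

lemma upSepPair_iff_exists_isSepTriple {down : Prop} (hu : ¬ down) :
    UpSepPair σ a ↔ ∃ i p j, IsSepTriple σ down i p j ∧ σ i = a := by
  rw [exists_isSepTriple_iff]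
  refine exists_congr fun hb => ⟨?_, ?_⟩
  · rintro ⟨-, p, hip, hpj, hlt⟩
    exact ⟨p, hlt, fun hd => absurd hd hu, fun _ => ⟨hip, hpj⟩⟩
  · rintro ⟨p, hlt, -, hup⟩
    obtain ⟨hip, hpj⟩ := hup hu
    exact ⟨hip.trans hpj, p, hip, hpj, hlt⟩

end SepTriple

section AltChain

variable {n k : ℕ} {σ : Equiv.Perm (Fin n)} {firstDown : Bool} {f : Fin k → Fin n}

lemma altChain_iff_exists_isSepTriple :
    AltChain σ firstDown f ↔ StrictMono f ∧ ∀ c : Fin k, ∃ i p j,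
      IsSepTriple σ ((c : ℕ) % 2 = 0 ↔ firstDown = true) i p j ∧ σ i = f c := by
  refine and_congr_right fun _ => forall_congr' fun c => ?_
  split_ifs with hc
  · exact downSepPair_iff_exists_isSepTriple hc
  · exact upSepPair_iff_exists_isSepTriple hc

lemma AltChain.exists_contains (hf : AltChain σ firstDown f) :
    ∃ (m : ℕ) (τ : Equiv.Perm (Fin m)) (g : Fin k → Fin m),
      m ≤ 3 * k ∧ Pattern.Contains σ τ ∧ AltChain τ firstDown g := by
  obtain ⟨hmono, htriple⟩ := altChain_iff_exists_isSepTriple.1 hf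
  choose i p j hsep hi using htriple
  let s : Finset (Fin n) := univ.biUnion fun c => {i c, p c, j c}
  have hcard : #s ≤ 3 * k := by
    simpa [mul_comm] using card_biUnion_le_card_mul univ _ 3 fun c _ =>
      card_le_three (a := i c) (b := p c) (c := j c)
  obtain ⟨τ, α, hα, hrange⟩ := exists_isOccurrence_range_eq σ s
  have exists_apply_eq (c : Fin k) {x : Fin n} (hx : x ∈ ({i c, p c, j c} : Finset (Fin n))) :
      ∃ y, α y = x :=
    hrange.ge (mem_biUnion.2 ⟨c, mem_univ c, hx⟩)
  choose iτ hiτ using fun c => exists_apply_eq c (x := i c) (by simp)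
  choose pτ hpτ using fun c => exists_apply_eq c (x := p c) (by simp)
  choose jτ hjτ using fun c => exists_apply_eq c (x := j c) (by simp)
  refine ⟨#s, τ, fun c => τ (iτ c), hcard, hα.contains, altChain_iff_exists_isSepTriple.2
    ⟨fun c d hcd => ?_, fun c => ⟨iτ c, pτ c, jτ c, hα.isSepTriple ?_, rfl⟩⟩⟩
  · rw [← hα.lt_iff_lt, hiτ, hiτ, hi, hi]
    exact hmono hcd
  · rw [hiτ, hpτ, hjτ]
    exact hsep c

lemma AltChain.comp_castLE (hf : AltChain σ firstDown f) {l : ℕ} (h : l ≤ k) :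
    AltChain σ firstDown (f ∘ Fin.castLE h) :=
  ⟨hf.1.comp (Fin.strictMono_castLE h), fun c => hf.2 (Fin.castLE h c)⟩

lemma AltChain.length_le (hf : AltChain σ firstDown f) : k ≤ n := by
  simpa using Fintype.card_le_of_injective f hf.1.injective

end AltChain

section RevTier

variable {n k : ℕ} {σ : Equiv.Perm (Fin n)}

lemma bddAbove_setOf_altChain (σ : Equiv.Perm (Fin n)) (firstDown : Bool) :
    BddAbove {k : ℕ | ∃ f : Fin k → Fin n, AltChain σ firstDown f} :=
  ⟨n, fun _ ⟨_, hf⟩ => hf.length_le⟩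

lemma le_revTier_iff_exists_altChain :
    k ≤ revTier σ ↔ ∃ f : Fin k → Fin n, AltChain σ true f := by
  refine ⟨fun hk => ?_, le_csSup (bddAbove_setOf_altChain σ true)⟩
  have hne : {k : ℕ | ∃ f : Fin k → Fin n, AltChain σ true f}.Nonempty :=
    ⟨0, Fin.elim0, fun c => c.elim0, fun c => c.elim0⟩
  obtain ⟨f, hf⟩ := Nat.sSup_mem hne (bddAbove_setOf_altChain σ true)
  exact ⟨_, hf.comp_castLE hk⟩

lemma exists_contains_le_revTier (hk : k ≤ revTier σ) :
    ∃ (m : ℕ) (τ : Equiv.Perm (Fin m)), m ≤ 3 * k ∧ Pattern.Contains σ τ ∧ k ≤ revTier τ := by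
  obtain ⟨f, hf⟩ := le_revTier_iff_exists_altChain.1 hk
  obtain ⟨m, τ, g, hm, hστ, hg⟩ := hf.exists_contains
  exact ⟨m, τ, hm, hστ, le_revTier_iff_exists_altChain.2 ⟨g, hg⟩⟩

end RevTier

/-- every basis element of the class of permutations with rev-tier at most
`t` has length at most `3(t+1)`. -/
theorem basisElt_length_le (t : ℕ) {n : ℕ} (σ : Equiv.Perm (Fin n))
    (h : IsBasisElt t σ) : n ≤ 3 * (t + 1) := by
  obtain ⟨htier, hmin⟩ := h
  obtain ⟨m, τ, hm, hστ, hτ⟩ := exists_contains_le_revTier htier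
  have hnm : n ≤ m := by
    by_contra! hmn
    exact absurd (hmin m τ hmn hστ) (Nat.not_le.2 hτ)
  exact hnm.trans hm
end

section
/- For every integer n ≥ 2, the maximum rev-tier over all permutations of length n equals n−2. Moreover, this maximum is attained by the permutation π = (n−2)(n−4)⋯6 4 2 n 1 3 5 ⋯ (n−1) when n is even, and by π = (n−1)(n−3)⋯6 4 2 n 1 3 5 ⋯ (n−2) when n is odd, whose maximum-length alternating down/up sequence of separated pairs is (1,2), (2,3), …, (n−2,n−1). -/
/-!
A separated pair `(a, a + 1)` of 0-indexed values needs a value larger than `a + 1`, so `a < n - 2`;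
the lower values of a chain are distinct, hence a chain has length at most `n - 2`.

Conversely, suppose that all odd values other than the maximum precede it and all even values other
than the maximum follow it. Then for `a < n - 2` the values `a` and `a + 1` lie on opposite sides of
the maximum, which separates them: the pair is down oriented for `a` even and up oriented for `a`
odd, so all the pairs with `a < n - 2` form a single alternating chain.
-/

section

variable {n t : ℕ} {σ : Equiv.Perm (Fin n)} {a p : Fin n} {b : Bool} {f : Fin t → Fin n}

theorem SepPair.add_two_lt (h : SepPair σ a) : (a : ℕ) + 2 < n := by
  rcases h with ⟨_, _, q, _, _, hq⟩ | ⟨_, _, q, _, _, hq⟩ <;> omega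

theorem AltChain.sepPair (h : AltChain σ b f) (j : Fin t) : SepPair σ (f j) := by
  have hj := h.2 j
  split_ifs at hj
  · exact Or.inr hj
  · exact Or.inl hj

theorem AltChain.length_le_s6 (h : AltChain σ b f) : t ≤ n - 2 := by
  have f_lt (j : Fin t) : (f j : ℕ) < n - 2 := Nat.lt_sub_of_add_lt (h.sepPair j).add_two_lt
  have strictMono_castLT : StrictMono fun j => (f j).castLT (f_lt j) := fun _ _ hij => h.1 hij
  simpa using Fintype.card_le_of_injective _ strictMono_castLT.injective

theorem revTier_le (σ : Equiv.Perm (Fin n)) : revTier σ ≤ n - 2 :=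
  csSup_le' fun _ ⟨_, hf⟩ => hf.length_le_s6

theorem AltChain.le_revTier (h : AltChain σ true f) : t ≤ revTier σ :=
  le_csSup ⟨n - 2, fun _ ⟨_, hf⟩ => hf.length_le_s6⟩ ⟨f, h⟩

/-- The largest entry of `σ` is in position `p`, the other odd entries precede it and the other even
entries follow it. Parity refers to 0-indexed values, so it is opposite to that of the entries
`1, …, n` of the informal statement. -/
structure ParitySplitAt (σ : Equiv.Perm (Fin n)) (p : Fin n) : Prop where
  apply_le : ∀ i, σ i ≤ σ p
  lt_of_odd : ∀ i, i ≠ p → Odd (σ i : ℕ) → i < p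
  gt_of_even : ∀ i, i ≠ p → Even (σ i : ℕ) → p < i

namespace ParitySplitAt

theorem le_apply (h : ParitySplitAt σ p) (a : Fin n) : a ≤ σ p := by
  simpa using h.apply_le (σ.symm a)

theorem symm_ne (h : ParitySplitAt σ p) (ha : (a : ℕ) + 1 < n) : σ.symm a ≠ p := by
  intro symm_eq
  have succ_le : (⟨a + 1, ha⟩ : Fin n) ≤ a := by
    simpa [← symm_eq] using h.le_apply ⟨a + 1, ha⟩
  exact Nat.not_succ_le_self _ succ_le

theorem symm_lt (h : ParitySplitAt σ p) (ha : (a : ℕ) + 1 < n) (odd_a : Odd (a : ℕ)) :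
    σ.symm a < p :=
  h.lt_of_odd _ (h.symm_ne ha) (by simpa using odd_a)

theorem lt_symm (h : ParitySplitAt σ p) (ha : (a : ℕ) + 1 < n) (even_a : Even (a : ℕ)) :
    p < σ.symm a :=
  h.gt_of_even _ (h.symm_ne ha) (by simpa using even_a)

theorem downSepPair (h : ParitySplitAt σ p) (ha : (a : ℕ) + 2 < n) (even_a : Even (a : ℕ)) :
    DownSepPair σ a := by
  have ha' : (a : ℕ) + 1 < n := by omega
  have succ_lt : σ.symm ⟨a + 1, ha'⟩ < p := h.symm_lt ha even_a.add_one
  have lt_self : p < σ.symm a := h.lt_symm ha' even_a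
  exact ⟨ha', succ_lt.trans lt_self, p, succ_lt, lt_self, h.le_apply ⟨a + 2, ha⟩⟩

theorem upSepPair (h : ParitySplitAt σ p) (ha : (a : ℕ) + 2 < n) (odd_a : Odd (a : ℕ)) :
    UpSepPair σ a := by
  have ha' : (a : ℕ) + 1 < n := by omega
  have self_lt : σ.symm a < p := h.symm_lt ha' odd_a
  have lt_succ : p < σ.symm ⟨a + 1, ha'⟩ := h.lt_symm ha odd_a.add_one
  exact ⟨ha', self_lt.trans lt_succ, p, self_lt, lt_succ, h.le_apply ⟨a + 2, ha⟩⟩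

theorem altChain_castLE (h : ParitySplitAt σ p) :
    AltChain σ true (Fin.castLE (Nat.sub_le n 2)) := by
  refine ⟨Fin.strictMono_castLE _, fun j => ?_⟩
  have hj : (j : ℕ) + 2 < n := Nat.add_lt_of_lt_sub j.isLt
  simp only [iff_true, ← Nat.even_iff]
  split_ifs with even_j
  · exact h.downSepPair hj even_j
  · exact h.upSepPair hj (Nat.not_even_iff_odd.mp even_j)

theorem revTier_eq (h : ParitySplitAt σ p) : revTier σ = n - 2 :=
  (revTier_le σ).antisymm h.altChain_castLE.le_revTier

end ParitySplitAt

theorem maxPermVal_injective (n : ℕ) : Function.Injective (maxPermVal n) := by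
  intro i j hij
  simp only [maxPermVal, Fin.ext_iff] at hij ⊢
  split_ifs at hij <;> dsimp only at hij <;> omega

/-- The permutation with one-line notation `maxPermVal n`, as an equivalence. -/
noncomputable def maxPerm (n : ℕ) : Equiv.Perm (Fin n) :=
  Equiv.ofBijective (maxPermVal n) (maxPermVal_injective n).bijective_of_finite

theorem maxPerm_apply (n : ℕ) (i : Fin n) : maxPerm n i = maxPermVal n i := rfl

theorem maxPerm_paritySplitAt (hn : (n - 1) / 2 < n) :
    ParitySplitAt (maxPerm n) ⟨(n - 1) / 2, hn⟩ where
  apply_le i := by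
    have apply_mid : (maxPerm n ⟨(n - 1) / 2, hn⟩ : ℕ) = n - 1 := by
      simp [maxPerm_apply, maxPermVal]
    rw [Fin.le_def, apply_mid]
    exact Nat.le_sub_one_of_lt (maxPerm n i).isLt
  lt_of_odd i i_ne odd_apply := by
    rw [Ne, Fin.ext_iff] at i_ne
    by_contra mid_le
    rw [Fin.lt_def] at mid_le
    simp [maxPerm_apply, maxPermVal, mid_le, i_ne, Nat.odd_iff] at odd_apply
  gt_of_even i i_ne even_apply := by
    rw [Ne, Fin.ext_iff] at i_ne
    by_contra le_mid
    have i_lt : (i : ℕ) < (n - 1) / 2 := lt_of_le_of_ne (not_lt.mp le_mid) i_ne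
    simp only [maxPerm_apply, maxPermVal, dif_pos i_lt, Nat.even_iff] at even_apply
    omega

end

/-- for `n ≥ 2` the maximal rev-tier of a permutation of length `n` is
`n - 2`, attained by the explicit permutation `maxPermVal n` (evens of `{1,…,n}`
decreasing, then `n`, then odds increasing), whose maximum alternating down/up sequence
of separated pairs is `(1,2), (2,3), …, (n-2,n-1)`. -/
theorem max_revTier (n : ℕ) (hn : 2 ≤ n) :
    (∀ σ : Equiv.Perm (Fin n), revTier σ ≤ n - 2) ∧
    (∃ σ : Equiv.Perm (Fin n), (∀ i : Fin n, σ i = maxPermVal n i) ∧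
      revTier σ = n - 2 ∧
      ∃ f : Fin (n - 2) → Fin n, AltChain σ true f ∧ ∀ j : Fin (n - 2), (f j : ℕ) = (j : ℕ)) := by
  have split : ParitySplitAt (maxPerm n) ⟨(n - 1) / 2, by omega⟩ := maxPerm_paritySplitAt _
  exact ⟨revTier_le, maxPerm n, maxPerm_apply n, split.revTier_eq,
    Fin.castLE (Nat.sub_le n 2), split.altChain_castLE, fun _ => rfl⟩
end
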